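/- Let L and S be positive integers with S ≥ L+2, let γ ∈ (0,1) be the positive root of Lγ + Sγ² = 1, set 1−τ = −log(Sγ)/log γ, and let (ξ^j)_{j≥1} be the (L,S)-sequence of points. For each N, let P_{L,S}(N) = { ((n−1)/N, ξⁿ) : n = 1, …, N } be the (L,S)-point set à la van der Corput of order N. Then there exists a constant C₃ > 0 such that for every integer N ≥ 2 one has N · D₂(P_{L,S}(N)) ≤ C₃ · N^{1−τ} · log N. -/

import Mathlib

open Finset Real

noncomputable section

/-- The `k`-th digit of `n` in base `b`. -/
def lsDigit (b n k : ℕ) : ℕ := n / b ^ k % b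

/-- Membership in the set `N_{L,S}`: for every `k`, the pair of consecutive digits
`(a_k(n), a_{k+1}(n))` in base `L+S` does not lie in
`{L,…,L+S−1} × {1,…,L+S−1}`. -/
def memNLS (L S n : ℕ) : Prop :=
  ∀ k : ℕ, ¬ (L ≤ lsDigit (L + S) n k ∧ lsDigit (L + S) n k ≤ L + S - 1 ∧
      1 ≤ lsDigit (L + S) n (k + 1) ∧ lsDigit (L + S) n (k + 1) ≤ L + S - 1)

/-- The modified digit `ã`: `ã = a` if `a ≤ L−1`, and `ã = L + γ(a−L)` if `L ≤ a`. -/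
def lsTilde (L : ℕ) (γ : ℝ) (a : ℕ) : ℝ :=
  if a < L then (a : ℝ) else (L : ℝ) + γ * ((a : ℝ) - (L : ℝ))

/-- The radical-inverse-type function `φ_{L,S}(n) = Σ_{k=0}^{M} ã_k(n) γ^{k+1}`,
with `M = ⌊log_{L+S} n⌋`. -/
def lsPhi (L S : ℕ) (γ : ℝ) (n : ℕ) : ℝ :=
  ∑ k ∈ Finset.range (Nat.log (L + S) n + 1),
    lsTilde L γ (lsDigit (L + S) n k) * γ ^ (k + 1)

/-- The `(L,S)`-sequence of points: `ξ^j = φ_{L,S}(n_j)` where `n_1 < n_2 < ⋯`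
is the increasing enumeration of `N_{L,S}` (so `n_j = Nat.nth (memNLS L S) (j-1)`). -/
def lsSeq (L S : ℕ) (γ : ℝ) (j : ℕ) : ℝ :=
  lsPhi L S γ (Nat.nth (memNLS L S) (j - 1))

/-- One-dimensional discrepancy of the first `N` terms `x 1, …, x N` of a sequence:
`sup_{0 ≤ a < b ≤ 1} |(1/N) Σ_{j=1}^N χ_{[a,b)}(x j) − (b−a)|`. -/
def discrep (x : ℕ → ℝ) (N : ℕ) : ℝ :=
  ⨆ p : {p : ℝ × ℝ // 0 ≤ p.1 ∧ p.1 < p.2 ∧ p.2 ≤ 1},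
    |(∑ j ∈ Finset.Icc 1 N,
        Set.indicator (Set.Ico p.1.1 p.1.2) (fun _ => (1 : ℝ)) (x j)) / N
      - (p.1.2 - p.1.1)|

/-- Two-dimensional (star) discrepancy of the first `N` terms of a sequence of points
in the unit square:
`sup_{0 < a ≤ 1, 0 < b ≤ 1} |(1/N) Σ_{j=1}^N χ_{[0,a)×[0,b)}(x j) − ab|`. -/
def discrep2 (x : ℕ → ℝ × ℝ) (N : ℕ) : ℝ :=
  ⨆ p : {p : ℝ × ℝ // 0 < p.1 ∧ p.1 ≤ 1 ∧ 0 < p.2 ∧ p.2 ≤ 1},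
    |(∑ j ∈ Finset.Icc 1 N,
        Set.indicator (Set.Ico (0 : ℝ) p.1.1) (fun _ => (1 : ℝ)) (x j).1 *
        Set.indicator (Set.Ico (0 : ℝ) p.1.2) (fun _ => (1 : ℝ)) (x j).2) / N
      - p.1.1 * p.1.2|

/-!
Prepending digits to an index `m ∈ N_{L,S}` acts on points by `φ(a + b m) = γ (a + φ(m))` for
`a < L` and by `φ(L + s + b² m) = L γ + γ² (s + φ(m))` for `s < S`. These maps tile `[0, 1)` because
`L γ + S γ² = 1`. Splitting the indices `n < X` by their last digits, the local discrepancy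
`Δ(X, β)` becomes the local discrepancy of the tile containing `β` plus an error that measures how
far the numbers of indices falling into the tiles are from proportional to their lengths.

That error is controlled by `T(X / b) - γ T(X)`, where `T(X)` counts the indices below `X`. Up to
bounded terms `T(X) = L T(X / b) + S T(X / b²)`, with characteristic roots `γ⁻¹` and `-S γ`; the
difference cancels the first, so it is `O((S γ) ^ k)` for `X ≤ b ^ k`, as `S γ > 1`. Hence so is
`Δ(X, β)`. For `b ^ k ≤ X` the number of points is at least a constant times `γ⁻¹ ^ k`, and
`(S γ) ^ k = (γ⁻¹ ^ k) ^ (1 - τ)`.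

Finally the points `((n - 1) / N, ξⁿ)` in `[0, a) × [0, β)` are the first `⌈a N⌉` terms of the
sequence in `[0, β)`, so the planar discrepancy exceeds the linear one by at most `1`, and the
bound holds even without the factor `log N`.
-/

/-! ### Residue classes of an initial segment -/

lemma lt_sub_ceilDiv_iff {b : ℕ} (hb : 0 < b) {X a m : ℕ} :
    m < (X - a) ⌈/⌉ b ↔ a + b * m < X := by
  rw [← not_le, ceilDiv_le_iff_le_mul hb]
  omega

lemma ceilDiv_ceilDiv {b c : ℕ} (hb : 0 < b) (hc : 0 < c) (X : ℕ) :
    X ⌈/⌉ b ⌈/⌉ c = X ⌈/⌉ (b * c) :=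
  eq_of_forall_ge_iff fun m => by
    rw [ceilDiv_le_iff_le_mul hc, ceilDiv_le_iff_le_mul hb, ceilDiv_le_iff_le_mul (by positivity),
      mul_assoc]

lemma div_le_sub_ceilDiv {a b : ℕ} (hab : a < b) (X : ℕ) : X / b ≤ (X - a) ⌈/⌉ b := by
  refine le_of_forall_lt fun m hm => (lt_sub_ceilDiv_iff (by omega)).2 ?_
  have h := (Nat.le_div_iff_mul_le (by omega)).1 (Nat.succ_le_of_lt hm)
  rw [Nat.succ_mul, mul_comm] at h
  omega

lemma ceilDiv_le_div_add_one {b : ℕ} (hb : 0 < b) (X : ℕ) : X ⌈/⌉ b ≤ X / b + 1 :=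
  (ceilDiv_le_iff_le_mul hb).2 (Nat.lt_mul_div_succ X hb).le

lemma sub_ceilDiv_le {c : ℕ} (hc : 0 < c) (X a : ℕ) : (X - a) ⌈/⌉ c ≤ X ⌈/⌉ c :=
  (gc_mul_ceilDiv hc).monotone_l (Nat.sub_le X a)

lemma add_lt_add_pow_two {L S s : ℕ} (hs : s < S) : L + s < (L + S) ^ 2 :=
  (Nat.add_lt_add_left hs L).trans_le (Nat.le_self_pow two_ne_zero _)

lemma sum_range_eq_sum_residues {M : Type*} [AddCommMonoid M] {b : ℕ} (hb : 0 < b)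
    (f : ℕ → M) (X : ℕ) :
    ∑ n ∈ range X, f n = ∑ a ∈ range b, ∑ m ∈ range ((X - a) ⌈/⌉ b), f (a + b * m) := by
  rw [Finset.sum_sigma']
  refine Finset.sum_nbij' (fun n => ⟨n % b, n / b⟩) (fun p => p.1 + b * p.2) ?_ ?_ ?_ ?_ ?_
  · intro n hn
    simpa [lt_sub_ceilDiv_iff hb, Nat.mod_add_div, Nat.mod_lt n hb] using hn
  · rintro ⟨a, m⟩ h
    simp only [Finset.mem_sigma, Finset.mem_range, lt_sub_ceilDiv_iff hb] at h ⊢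
    exact h.2
  · exact fun n _ => Nat.mod_add_div n b
  · rintro ⟨a, m⟩ h
    have ha : a < b := by simpa using (Finset.mem_sigma.1 h).1
    simp [Nat.mod_eq_of_lt ha, Nat.add_mul_div_left _ _ hb, Nat.div_eq_of_lt ha]
  · exact fun n _ => by rw [Nat.mod_add_div]

/-! ### Digits and the set `N_{L,S}` -/

lemma lsDigit_zero (b n : ℕ) : lsDigit b n 0 = n % b := by simp [lsDigit]

lemma lsDigit_add_mul_succ {b a : ℕ} (ha : a < b) (n k : ℕ) :
    lsDigit b (a + b * n) (k + 1) = lsDigit b n k := by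
  have hb : 0 < b := by omega
  rw [lsDigit, lsDigit, pow_succ', ← Nat.div_div_eq_div_mul, Nat.add_mul_div_left _ _ hb,
    Nat.div_eq_of_lt ha, zero_add]

lemma lsDigit_add_mul_zero {b a : ℕ} (ha : a < b) (n : ℕ) : lsDigit b (a + b * n) 0 = a := by
  simp [lsDigit, Nat.mod_eq_of_lt ha]

instance decidablePredMemNLS (L S : ℕ) : DecidablePred (memNLS L S) :=
  Classical.decPred _

lemma memNLS_zero (L S : ℕ) : memNLS L S 0 := fun k => by simp [lsDigit]

lemma memNLS_add_mul {L S a : ℕ} (ha : a < L + S) (n : ℕ) :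
    memNLS L S (a + (L + S) * n) ↔ (a < L ∨ n % (L + S) = 0) ∧ memNLS L S n := by
  have hlt := Nat.mod_lt n (show 0 < L + S by omega)
  constructor
  · refine fun h => ⟨?_, fun k => ?_⟩
    · have := h 0
      rw [lsDigit_add_mul_zero ha, lsDigit_add_mul_succ ha, lsDigit_zero] at this
      omega
    · simpa only [lsDigit_add_mul_succ ha] using h (k + 1)
  · rintro ⟨h, hn⟩ (_ | k)
    · rw [lsDigit_add_mul_zero ha, lsDigit_add_mul_succ ha, lsDigit_zero]
      omega
    · simpa only [lsDigit_add_mul_succ ha] using hn k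

lemma memNLS_add_mul_of_lt {L S a : ℕ} (ha : a < L) (n : ℕ) :
    memNLS L S (a + (L + S) * n) ↔ memNLS L S n := by
  simp [memNLS_add_mul (show a < L + S by omega), ha]

lemma memNLS_mul {L S : ℕ} (hL : 0 < L) (n : ℕ) :
    memNLS L S ((L + S) * n) ↔ memNLS L S n := by
  simpa using memNLS_add_mul_of_lt (S := S) hL n

lemma memNLS_add_add_mul {L S s : ℕ} (hs : s < S) (n : ℕ) :
    memNLS L S (L + s + (L + S) * n) ↔ n % (L + S) = 0 ∧ memNLS L S n := by
  simp [memNLS_add_mul (show L + s < L + S by omega)]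

lemma setOfPred_memNLS_infinite {L S : ℕ} (hL : 0 < L) (hb : 1 < L + S) :
    (Set.ofPred (memNLS L S)).Infinite := by
  have hpow (k : ℕ) : memNLS L S ((L + S) ^ k) := by
    induction k with
    | zero =>
      simpa using (memNLS_add_mul (L := L) (S := S) hb 0).2 ⟨by simp, memNLS_zero L S⟩
    | succ k ih => rwa [pow_succ', memNLS_mul hL]
  exact Set.infinite_of_injective_forall_mem (Nat.pow_right_injective hb) hpow

lemma sum_filter_memNLS_add_add_mul {M : Type*} [AddCommMonoid M] {L S s : ℕ} (hL : 0 < L)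
    (hs : s < S) (f : ℕ → M) (X : ℕ) :
    ∑ m ∈ range X with memNLS L S (L + s + (L + S) * m), f m =
      ∑ m ∈ range (X ⌈/⌉ (L + S)) with memNLS L S m, f ((L + S) * m) := by
  have hb : 0 < L + S := by omega
  simp only [Finset.sum_filter]
  rw [sum_range_eq_sum_residues hb, Finset.sum_eq_single_of_mem 0 (Finset.mem_range.2 hb)]
  · simp [memNLS_add_add_mul hs, memNLS_mul hL]
  · intro c hc hc0
    refine Finset.sum_eq_zero fun n _ => if_neg fun h => hc0 ?_
    simpa [Nat.mod_eq_of_lt (Finset.mem_range.1 hc)] using ((memNLS_add_add_mul hs _).1 h).1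

/-- The elements of `N_{L,S}` end either in a digit `a < L`, or in the digits `0` and `L + s` with
`s < S`; what precedes these digits is an arbitrary element of `N_{L,S}`. -/
lemma sum_filter_memNLS {M : Type*} [AddCommMonoid M] {L : ℕ} (hL : 0 < L) (S : ℕ)
    (f : ℕ → M) (X : ℕ) :
    ∑ n ∈ range X with memNLS L S n, f n =
      ∑ a ∈ range L, ∑ m ∈ range ((X - a) ⌈/⌉ (L + S)) with memNLS L S m,
        f (a + (L + S) * m) +
      ∑ s ∈ range S, ∑ m ∈ range ((X - (L + s)) ⌈/⌉ (L + S) ^ 2) with memNLS L S m,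
        f (L + s + (L + S) ^ 2 * m) := by
  have hb : 0 < L + S := by omega
  rw [Finset.sum_filter, sum_range_eq_sum_residues hb, Finset.sum_range_add]
  simp only [← Finset.sum_filter]
  congr 1
  · refine Finset.sum_congr rfl fun a ha => ?_
    simp only [memNLS_add_mul_of_lt (Finset.mem_range.1 ha)]
  · refine Finset.sum_congr rfl fun s hs => ?_
    rw [sum_filter_memNLS_add_add_mul hL (Finset.mem_range.1 hs)
      (fun m => f (L + s + (L + S) * m)), ceilDiv_ceilDiv hb hb]
    simp only [pow_two, mul_assoc]

/-! ### The radical inverse -/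

lemma lsTilde_zero (L : ℕ) (γ : ℝ) : lsTilde L γ 0 = 0 := by
  rcases Nat.eq_zero_or_pos L with rfl | hL
  · simp [lsTilde]
  · simp [lsTilde, hL]

lemma lsTilde_nonneg (L : ℕ) {γ : ℝ} (hγ : 0 ≤ γ) (a : ℕ) : 0 ≤ lsTilde L γ a := by
  unfold lsTilde
  split_ifs with h
  · positivity
  · have := sub_nonneg.2 (Nat.cast_le (α := ℝ).2 (not_lt.1 h))
    positivity

lemma lsPhi_zero (L S : ℕ) (γ : ℝ) : lsPhi L S γ 0 = 0 := by
  simp [lsPhi, lsDigit, lsTilde_zero]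

lemma lsPhi_nonneg (L S : ℕ) {γ : ℝ} (hγ : 0 ≤ γ) (n : ℕ) : 0 ≤ lsPhi L S γ n :=
  Finset.sum_nonneg fun _ _ => mul_nonneg (lsTilde_nonneg L hγ _) (by positivity)

lemma lsPhi_eq_sum_range {L S : ℕ} (hb : 1 < L + S) (γ : ℝ) {n K : ℕ}
    (hK : Nat.log (L + S) n + 1 ≤ K) :
    lsPhi L S γ n = ∑ k ∈ range K, lsTilde L γ (lsDigit (L + S) n k) * γ ^ (k + 1) := by
  refine Finset.sum_subset (by simpa using hK) fun k _ hk => ?_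
  have hk : Nat.log (L + S) n < k := by simpa using hk
  rw [lsDigit, Nat.div_eq_of_lt (Nat.lt_pow_of_log_lt hb hk), Nat.zero_mod, lsTilde_zero, zero_mul]

lemma lsPhi_add_mul {L S : ℕ} (hb : 1 < L + S) (γ : ℝ) {a : ℕ} (ha : a < L + S) (n : ℕ) :
    lsPhi L S γ (a + (L + S) * n) = γ * (lsTilde L γ a + lsPhi L S γ n) := by
  set K := Nat.log (L + S) n + Nat.log (L + S) (a + (L + S) * n) + 1
  rw [lsPhi_eq_sum_range hb γ (n := n) (K := K) (by omega),
    lsPhi_eq_sum_range hb γ (n := a + (L + S) * n) (K := K + 1) (by omega),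
    Finset.sum_range_succ', lsDigit_add_mul_zero ha, mul_add, Finset.mul_sum, add_comm]
  congr 1
  · ring
  · refine Finset.sum_congr rfl fun k _ => ?_
    rw [lsDigit_add_mul_succ ha]
    ring

lemma lsPhi_add_mul_of_lt {L S : ℕ} (hb : 1 < L + S) (γ : ℝ) {a : ℕ} (ha : a < L) (n : ℕ) :
    lsPhi L S γ (a + (L + S) * n) = γ * (a + lsPhi L S γ n) := by
  rw [lsPhi_add_mul hb γ (by omega), lsTilde, if_pos ha]

lemma lsPhi_add_sq_mul {L S : ℕ} (hb : 1 < L + S) (γ : ℝ) {s : ℕ} (hs : s < S) (n : ℕ) :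
    lsPhi L S γ (L + s + (L + S) ^ 2 * n) = L * γ + γ ^ 2 * (s + lsPhi L S γ n) := by
  have h := lsPhi_add_mul hb γ (show 0 < L + S by omega) n
  rw [zero_add, lsTilde_zero, zero_add] at h
  rw [pow_two, mul_assoc, lsPhi_add_mul hb γ (by omega), h, lsTilde, if_neg (by omega)]
  push_cast
  ring

lemma lsPhi_lt_one {L S : ℕ} (hb : 1 < L + S) {γ : ℝ} (hγ0 : 0 < γ)
    (hroot : (L : ℝ) * γ + (S : ℝ) * γ ^ 2 = 1) {n : ℕ} (hn : memNLS L S n) :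
    lsPhi L S γ n < 1 := by
  induction n using Nat.strong_induction_on with
  | _ n ih =>
  rcases Nat.eq_zero_or_pos n with rfl | hpos
  · simp [lsPhi_zero]
  obtain ⟨a, m, ha, rfl⟩ : ∃ a m, a < L + S ∧ n = a + (L + S) * m :=
    ⟨n % (L + S), n / (L + S), Nat.mod_lt _ (by omega), (Nat.mod_add_div n (L + S)).symm⟩
  obtain ⟨hcond, hm⟩ := (memNLS_add_mul ha m).1 hn
  by_cases haL : a < L
  · have hφ : lsPhi L S γ m < 1 := ih m (by nlinarith) hm
    have haL' : (a : ℝ) + 1 ≤ L := by exact_mod_cast haL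
    have hSγ : 0 ≤ (S : ℝ) * γ ^ 2 := by positivity
    rw [lsPhi_add_mul_of_lt hb γ haL]
    nlinarith
  · obtain ⟨q, rfl⟩ := Nat.dvd_of_mod_eq_zero (hcond.resolve_left haL)
    obtain ⟨s, rfl⟩ := Nat.exists_eq_add_of_le (not_lt.1 haL)
    have hs : s < S := by omega
    have hq : memNLS L S q :=
      ((memNLS_add_mul (a := 0) (by omega) q).1 (by simpa using hm)).2
    have hlt : q < L + s + (L + S) * ((L + S) * q) := by
      have := Nat.mul_le_mul_right q hb
      have := Nat.mul_le_mul_left (L + S) this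
      nlinarith
    have hφ : lsPhi L S γ q < 1 := ih q hlt hq
    have hs' : (s : ℝ) + 1 ≤ S := by exact_mod_cast hs
    have hγ2 : 0 < γ ^ 2 := by positivity
    rw [← mul_assoc, ← pow_two, lsPhi_add_sq_mul hb γ hs]
    nlinarith

/-! ### Counting functions -/

/-- `T(X)`, the number of elements of `N_{L,S}` below `X`, as a real number. -/
def lsTotal (L S X : ℕ) : ℝ := Nat.count (memNLS L S) X

/-- The number of `n ∈ N_{L,S}` below `X` with `φ_{L,S}(n) < β`, as a real number. Since
`φ_{L,S} ≥ 0`, these are the points in `[0, β)`. -/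
def lsCount (L S : ℕ) (γ : ℝ) (X : ℕ) (β : ℝ) : ℝ :=
  ∑ n ∈ range X with memNLS L S n, if lsPhi L S γ n < β then 1 else 0

section Counting

variable {L S : ℕ} {γ : ℝ}

lemma lsTotal_eq_sum (L S X : ℕ) : lsTotal L S X = ∑ n ∈ range X with memNLS L S n, (1 : ℝ) := by
  simp [lsTotal, Nat.count_eq_card_filter_range]

lemma lsTotal_nonneg (L S X : ℕ) : 0 ≤ lsTotal L S X := Nat.cast_nonneg _

lemma lsTotal_le (L S X : ℕ) : lsTotal L S X ≤ X :=
  Nat.cast_le.2 (Nat.count_le (memNLS L S))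

lemma lsTotal_mono (L S : ℕ) : Monotone (lsTotal L S) := fun _ _ h => by
  simpa [lsTotal] using Nat.count_monotone (memNLS L S) h

lemma one_le_lsTotal (L S : ℕ) {X : ℕ} (hX : 0 < X) : 1 ≤ lsTotal L S X := by
  refine le_trans ?_ (lsTotal_mono L S (Nat.succ_le_of_lt hX))
  simp [lsTotal, Nat.count_succ, memNLS_zero]

lemma lsTotal_succ_le (L S X : ℕ) : lsTotal L S (X + 1) ≤ lsTotal L S X + 1 := by
  rw [lsTotal, lsTotal, Nat.count_succ]
  split_ifs <;> simp

lemma lsTotal_nth (hL : 0 < L) (hb : 1 < L + S) (K : ℕ) :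
    lsTotal L S (Nat.nth (memNLS L S) K) = K := by
  rw [lsTotal, Nat.count_nth_of_infinite (setOfPred_memNLS_infinite hL hb)]

lemma lsTotal_div_le {a c : ℕ} (hac : a < c) (X : ℕ) :
    lsTotal L S (X / c) ≤ lsTotal L S ((X - a) ⌈/⌉ c) :=
  lsTotal_mono L S (div_le_sub_ceilDiv hac X)

lemma lsTotal_sub_ceilDiv_le {c : ℕ} (hc : 0 < c) (X a : ℕ) :
    lsTotal L S ((X - a) ⌈/⌉ c) ≤ lsTotal L S (X / c) + 1 :=
  (lsTotal_mono L S ((sub_ceilDiv_le hc X a).trans (ceilDiv_le_div_add_one hc X))).trans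
    (lsTotal_succ_le L S _)

lemma lsTotal_eq (hL : 0 < L) (S X : ℕ) :
    lsTotal L S X = ∑ a ∈ range L, lsTotal L S ((X - a) ⌈/⌉ (L + S)) +
      ∑ s ∈ range S, lsTotal L S ((X - (L + s)) ⌈/⌉ (L + S) ^ 2) := by
  simp only [lsTotal_eq_sum]
  exact sum_filter_memNLS hL S _ X

lemma mul_lsTotal_div_add_le (hL : 0 < L) (S X : ℕ) :
    L * lsTotal L S (X / (L + S)) + S * lsTotal L S (X / (L + S) ^ 2) ≤ lsTotal L S X := by
  rw [lsTotal_eq hL S X]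
  refine add_le_add ?_ ?_
  · simpa using Finset.card_nsmul_le_sum (range L) _ _ fun a ha =>
      lsTotal_div_le (L := L) (S := S) ((Finset.mem_range.1 ha).trans_le (by omega)) X
  · simpa using Finset.card_nsmul_le_sum (range S) _ _ fun s hs =>
      lsTotal_div_le (L := L) (S := S) (add_lt_add_pow_two (Finset.mem_range.1 hs)) X

lemma lsTotal_le_mul_div_add (hL : 0 < L) (S X : ℕ) :
    lsTotal L S X ≤
      L * lsTotal L S (X / (L + S)) + S * lsTotal L S (X / (L + S) ^ 2) + (L + S) := by
  have hb : 0 < L + S := by omega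
  have hlong := Finset.sum_le_card_nsmul (range L) _ _ fun a _ =>
    lsTotal_sub_ceilDiv_le (L := L) (S := S) hb X a
  have hshort := Finset.sum_le_card_nsmul (range S) _ _ fun s _ =>
    lsTotal_sub_ceilDiv_le (L := L) (S := S) (pow_pos hb 2) X (L + s)
  simp only [Finset.card_range, nsmul_eq_mul] at hlong hshort
  rw [lsTotal_eq hL S X]
  linarith

lemma inv_pow_le_inv_mul_lsTotal (hL : 0 < L) (hγ0 : 0 < γ) (hγ1 : γ < 1)
    (hroot : (L : ℝ) * γ + (S : ℝ) * γ ^ 2 = 1) (k X : ℕ) (hX : (L + S) ^ k ≤ X) :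
    γ⁻¹ ^ k ≤ γ⁻¹ * lsTotal L S X := by
  have hb : 0 < L + S := by omega
  have hinv : 1 < γ⁻¹ := (one_lt_inv₀ hγ0).2 hγ1
  have hone : 1 ≤ lsTotal L S X := one_le_lsTotal L S ((pow_pos hb k).trans_le hX)
  induction k using Nat.twoStepInduction generalizing X with
  | zero => nlinarith
  | one => nlinarith
  | more k ih ih' =>
    have h1 : (L + S) ^ (k + 1) ≤ X / (L + S) := by
      rwa [Nat.le_div_iff_mul_le hb, ← pow_succ]
    have h2 : (L + S) ^ k ≤ X / (L + S) ^ 2 := by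
      rwa [Nat.le_div_iff_mul_le (pow_pos hb 2), ← pow_add]
    have hsq : γ⁻¹ ^ 2 = L * γ⁻¹ + S := by
      field_simp
      linarith
    calc γ⁻¹ ^ (k + 2) = L * γ⁻¹ ^ (k + 1) + S * γ⁻¹ ^ k := by
          rw [pow_add, hsq]
          ring
      _ ≤ L * (γ⁻¹ * lsTotal L S (X / (L + S))) + S * (γ⁻¹ * lsTotal L S (X / (L + S) ^ 2)) := by
          gcongr
          · exact ih' _ h1 (one_le_lsTotal L S ((pow_pos hb _).trans_le h1))
          · exact ih _ h2 (one_le_lsTotal L S ((pow_pos hb _).trans_le h2))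
      _ = γ⁻¹ * (L * lsTotal L S (X / (L + S)) + S * lsTotal L S (X / (L + S) ^ 2)) := by ring
      _ ≤ γ⁻¹ * lsTotal L S X := by
          gcongr
          exact mul_lsTotal_div_add_le hL S X

lemma lsCount_nonneg (L S : ℕ) (γ : ℝ) (X : ℕ) (β : ℝ) : 0 ≤ lsCount L S γ X β :=
  Finset.sum_nonneg fun _ _ => by split_ifs <;> norm_num

lemma lsCount_le_lsTotal (L S : ℕ) (γ : ℝ) (X : ℕ) (β : ℝ) :
    lsCount L S γ X β ≤ lsTotal L S X := by
  rw [lsTotal_eq_sum]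
  exact Finset.sum_le_sum fun _ _ => by split_ifs <;> norm_num

lemma lsCount_of_nonpos (hγ : 0 ≤ γ) (X : ℕ) {β : ℝ} (hβ : β ≤ 0) : lsCount L S γ X β = 0 :=
  Finset.sum_eq_zero fun n _ => if_neg (hβ.trans (lsPhi_nonneg L S hγ n)).not_gt

lemma lsCount_of_one_le (hb : 1 < L + S) (hγ0 : 0 < γ)
    (hroot : (L : ℝ) * γ + (S : ℝ) * γ ^ 2 = 1) (X : ℕ) {β : ℝ} (hβ : 1 ≤ β) :
    lsCount L S γ X β = lsTotal L S X := by
  rw [lsTotal_eq_sum]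
  exact Finset.sum_congr rfl fun n hn =>
    if_pos ((lsPhi_lt_one hb hγ0 hroot (Finset.mem_filter.1 hn).2).trans_le hβ)

lemma lsCount_eq (hL : 0 < L) (hb : 1 < L + S) (hγ : 0 < γ) (X : ℕ) (β : ℝ) :
    lsCount L S γ X β =
      ∑ a ∈ range L, lsCount L S γ ((X - a) ⌈/⌉ (L + S)) (β / γ - a) +
      ∑ s ∈ range S, lsCount L S γ ((X - (L + s)) ⌈/⌉ (L + S) ^ 2)
        ((β - L * γ) / γ ^ 2 - s) := by
  rw [lsCount, sum_filter_memNLS hL]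
  congr 1
  · refine Finset.sum_congr rfl fun a ha => Finset.sum_congr rfl fun n _ => if_congr ?_ rfl rfl
    rw [lsPhi_add_mul_of_lt hb γ (Finset.mem_range.1 ha), lt_sub_iff_add_lt', lt_div_iff₀' hγ]
  · refine Finset.sum_congr rfl fun s hs => Finset.sum_congr rfl fun n _ => if_congr ?_ rfl rfl
    rw [lsPhi_add_sq_mul hb γ (Finset.mem_range.1 hs), lt_sub_iff_add_lt',
      lt_div_iff₀' (pow_pos hγ 2), lt_sub_iff_add_lt']

/-! ### The defect of the counting function -/

/-- The deviation `T(X / b) - γ T(X)` of the counting function of `N_{L,S}` from exact scaling under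
division by `b = L + S`. -/
def lsDefect (L S : ℕ) (γ : ℝ) (X : ℕ) : ℝ := lsTotal L S (X / (L + S)) - γ * lsTotal L S X

lemma lt_one_of_root (hb : 1 < L + S) (hroot : (L : ℝ) * γ + (S : ℝ) * γ ^ 2 = 1) : γ < 1 := by
  have hb' : (1 : ℝ) < L + S := by exact_mod_cast hb
  by_contra! h
  refine hroot.not_gt (hb'.trans_le (add_le_add ?_ ?_))
  · exact le_mul_of_one_le_right L.cast_nonneg h
  · exact le_mul_of_one_le_right S.cast_nonneg (one_le_pow₀ h)

lemma abs_lsDefect_le_mul_add (hL : 0 < L) (hγ0 : 0 < γ) (hγ1 : γ ≤ 1)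
    (hroot : (L : ℝ) * γ + (S : ℝ) * γ ^ 2 = 1) (X : ℕ) :
    |lsDefect L S γ X| ≤ S * γ * |lsDefect L S γ (X / (L + S))| + (L + S) := by
  have hlower := mul_lsTotal_div_add_le hL S X
  have hupper := lsTotal_le_mul_div_add hL S X
  set R := lsTotal L S X - (L * lsTotal L S (X / (L + S)) + S * lsTotal L S (X / (L + S) ^ 2))
    with hR
  have hR0 : 0 ≤ R := by linarith
  have hdefect : lsDefect L S γ X = -(S * γ * lsDefect L S γ (X / (L + S))) - γ * R := by
    simp only [lsDefect, hR, Nat.div_div_eq_div_mul, ← pow_two]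
    linear_combination -lsTotal L S (X / (L + S)) * hroot
  calc |lsDefect L S γ X| ≤ |-(S * γ * lsDefect L S γ (X / (L + S)))| + |γ * R| := by
        rw [hdefect]
        exact abs_sub _ _
    _ = S * γ * |lsDefect L S γ (X / (L + S))| + γ * R := by
        rw [abs_neg, abs_mul, abs_of_nonneg (by positivity : 0 ≤ (S : ℝ) * γ),
          abs_of_nonneg (by positivity : 0 ≤ γ * R)]
    _ ≤ S * γ * |lsDefect L S γ (X / (L + S))| + (L + S) := by
        gcongr
        exact (mul_le_of_le_one_left hR0 hγ1).trans (by linarith)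

lemma exists_abs_lsDefect_le (hL : 0 < L) (hb : 1 < L + S) (hγ0 : 0 < γ)
    (hroot : (L : ℝ) * γ + (S : ℝ) * γ ^ 2 = 1) (hρ : 1 < (S : ℝ) * γ) :
    ∃ D : ℝ, 0 < D ∧ ∀ k X : ℕ, X ≤ (L + S) ^ k → |lsDefect L S γ X| ≤ D * (S * γ) ^ k := by
  have hγ1 := (lt_one_of_root hb hroot).le
  set ρ := (S : ℝ) * γ
  have hρ' : 0 < ρ - 1 := by linarith
  set F : ℝ := (L + S) / (ρ - 1) with hF
  have hF0 : 0 ≤ F := by positivity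
  have hFρ : ρ * F - F = L + S := by
    rw [hF]
    field_simp
  -- The shift by the fixed point `-F` of `t ↦ ρ t + (L + S)` makes the recursion homogeneous.
  have hshift (k X : ℕ) (hX : X ≤ (L + S) ^ k) : |lsDefect L S γ X| ≤ (1 + F) * ρ ^ k - F := by
    induction k generalizing X with
    | zero =>
      have hX : X ≤ 1 := by simpa using hX
      have hT : lsTotal L S X ≤ 1 := (lsTotal_le L S X).trans (by exact_mod_cast hX)
      have hT0 := lsTotal_nonneg L S X
      have hdiv : X / (L + S) = 0 := Nat.div_eq_of_lt (hX.trans_lt hb)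
      rw [lsDefect, hdiv, show lsTotal L S 0 = 0 by simp [lsTotal], zero_sub, abs_neg,
        abs_of_nonneg (by positivity)]
      nlinarith
    | succ k ih =>
      have hX' : X / (L + S) ≤ (L + S) ^ k := Nat.div_le_of_le_mul (by rwa [← pow_succ'])
      calc |lsDefect L S γ X| ≤ ρ * |lsDefect L S γ (X / (L + S))| + (L + S) :=
            abs_lsDefect_le_mul_add hL hγ0 hγ1 hroot X
        _ ≤ ρ * ((1 + F) * ρ ^ k - F) + (L + S) := by
            gcongr
            exact ih _ hX'
        _ = (1 + F) * ρ ^ (k + 1) - F := by linear_combination -hFρ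
  exact ⟨1 + F, by positivity, fun k X hX => (hshift k X hX).trans (by linarith)⟩

/-! ### Local discrepancy -/

/-- The length of `[0, t) ∩ [0, 1)`, that is, the projection of `t` to `[0, 1]`. -/
def clampUnit (t : ℝ) : ℝ := Set.projIcc 0 1 zero_le_one t

lemma clampUnit_nonneg (t : ℝ) : 0 ≤ clampUnit t := (Set.projIcc 0 1 zero_le_one t).2.1

lemma clampUnit_le_one (t : ℝ) : clampUnit t ≤ 1 := (Set.projIcc 0 1 zero_le_one t).2.2

lemma clampUnit_of_nonpos {t : ℝ} (ht : t ≤ 0) : clampUnit t = 0 := by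
  rw [clampUnit, Set.projIcc_of_le_left _ ht]

lemma clampUnit_of_one_le {t : ℝ} (ht : 1 ≤ t) : clampUnit t = 1 := by
  rw [clampUnit, Set.projIcc_of_right_le _ ht]

lemma clampUnit_of_mem_Icc {t : ℝ} (ht : t ∈ Set.Icc 0 1) : clampUnit t = t := by
  rw [clampUnit, Set.projIcc_of_mem _ ht]

lemma sum_clampUnit_sub (m : ℕ) (t : ℝ) :
    ∑ i ∈ range m, clampUnit (t - i) = max 0 (min (m : ℝ) t) := by
  induction m with
  | zero => simp
  | succ m ih =>
    have hm : (0 : ℝ) ≤ m := m.cast_nonneg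
    rw [Finset.sum_range_succ, ih, Nat.cast_succ]
    rcases le_total t m with h | h
    · rw [clampUnit_of_nonpos (by linarith), min_eq_right h, min_eq_right (by linarith), add_zero]
    rw [min_eq_left h, max_eq_right hm]
    rcases le_total (m + 1 : ℝ) t with h' | h'
    · rw [clampUnit_of_one_le (by linarith), min_eq_left h', max_eq_right (by linarith)]
    · rw [clampUnit_of_mem_Icc ⟨by linarith, by linarith⟩, min_eq_right h',
        max_eq_right (by linarith)]
      ring

lemma mul_sum_clampUnit_div_sub {c : ℝ} (hc : 0 < c) (m : ℕ) (t : ℝ) :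
    c * ∑ i ∈ range m, clampUnit (t / c - i) = max 0 (min (m * c) t) := by
  rw [sum_clampUnit_sub, mul_max_of_nonneg _ _ hc.le, mul_min_of_nonneg _ _ hc.le,
    mul_div_cancel₀ _ hc.ne', mul_zero, mul_comm c]

lemma clampUnit_eq_sum (hγ : 0 < γ) (hroot : (L : ℝ) * γ + (S : ℝ) * γ ^ 2 = 1) (β : ℝ) :
    clampUnit β = γ * ∑ a ∈ range L, clampUnit (β / γ - a) +
      γ ^ 2 * ∑ s ∈ range S, clampUnit ((β - L * γ) / γ ^ 2 - s) := by
  have hL : (0 : ℝ) ≤ L * γ := by positivity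
  have hS : (0 : ℝ) ≤ S * γ ^ 2 := by positivity
  rw [mul_sum_clampUnit_div_sub hγ, mul_sum_clampUnit_div_sub (pow_pos hγ 2), clampUnit,
    Set.coe_projIcc]
  rcases le_total β (L * γ) with h | h
  · rw [min_eq_right h, min_eq_right (by linarith : β ≤ 1),
      max_eq_left ((min_le_right _ _).trans (by linarith : β - L * γ ≤ 0)), add_zero]
  · rw [min_eq_left h, max_eq_right hL, max_eq_right (le_min zero_le_one (hL.trans h)),
      max_eq_right (le_min hS (sub_nonneg.2 h)), ← min_add_add_left, hroot, add_sub_cancel]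

/-- The local discrepancy `Δ(X, β)` in `[0, β)` of the points whose index is below `X`. -/
def lsDisc (L S : ℕ) (γ : ℝ) (X : ℕ) (β : ℝ) : ℝ :=
  lsCount L S γ X β - clampUnit β * lsTotal L S X

lemma lsDisc_of_nonpos (hγ : 0 ≤ γ) (X : ℕ) {β : ℝ} (hβ : β ≤ 0) : lsDisc L S γ X β = 0 := by
  rw [lsDisc, lsCount_of_nonpos hγ X hβ, clampUnit_of_nonpos hβ, zero_mul, sub_zero]

lemma lsDisc_of_one_le (hb : 1 < L + S) (hγ0 : 0 < γ)
    (hroot : (L : ℝ) * γ + (S : ℝ) * γ ^ 2 = 1) (X : ℕ) {β : ℝ} (hβ : 1 ≤ β) :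
    lsDisc L S γ X β = 0 := by
  rw [lsDisc, lsCount_of_one_le hb hγ0 hroot X hβ, clampUnit_of_one_le hβ, one_mul, sub_self]

lemma abs_lsDisc_le (L S : ℕ) (γ : ℝ) (X : ℕ) (β : ℝ) : |lsDisc L S γ X β| ≤ X :=
  (abs_sub_le_of_nonneg_of_le (lsCount_nonneg L S γ X β) (lsCount_le_lsTotal L S γ X β)
    (mul_nonneg (clampUnit_nonneg β) (lsTotal_nonneg L S X))
    (mul_le_of_le_one_left (lsTotal_nonneg L S X) (clampUnit_le_one β))).trans (lsTotal_le L S X)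

lemma lsDisc_eq (hL : 0 < L) (hb : 1 < L + S) (hγ0 : 0 < γ)
    (hroot : (L : ℝ) * γ + (S : ℝ) * γ ^ 2 = 1) (X : ℕ) (β : ℝ) :
    lsDisc L S γ X β =
      (∑ a ∈ range L, lsDisc L S γ ((X - a) ⌈/⌉ (L + S)) (β / γ - a) +
      ∑ s ∈ range S, lsDisc L S γ ((X - (L + s)) ⌈/⌉ (L + S) ^ 2)
        ((β - L * γ) / γ ^ 2 - s)) +
      (∑ a ∈ range L, clampUnit (β / γ - a) *
        (lsTotal L S ((X - a) ⌈/⌉ (L + S)) - γ * lsTotal L S X) +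
      ∑ s ∈ range S, clampUnit ((β - L * γ) / γ ^ 2 - s) *
        (lsTotal L S ((X - (L + s)) ⌈/⌉ (L + S) ^ 2) - γ ^ 2 * lsTotal L S X)) := by
  rw [lsDisc, lsCount_eq hL hb hγ0, clampUnit_eq_sum hγ0 hroot β]
  simp only [lsDisc, mul_sub, Finset.sum_sub_distrib, ← Finset.sum_mul]
  ring

lemma abs_sum_range_le_of_support {m : ℕ} {g : ℕ → ℝ} {t B : ℝ} (hB : 0 ≤ B)
    (hg : ∀ i < m, |g i| ≤ B) (h0 : ∀ i < m, t - i ≤ 0 → g i = 0)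
    (h1 : ∀ i < m, 1 ≤ t - i → g i = 0) : |∑ i ∈ range m, g i| ≤ B := by
  have hfloor : ∀ i < m, i ≠ ⌊t⌋₊ → g i = 0 := by
    intro i him hi
    rcases lt_or_gt_of_ne hi with h | h
    · refine h1 i him (le_sub_iff_add_le'.2 ?_)
      exact_mod_cast (Nat.le_floor_iff' i.succ_ne_zero).1 h
    · exact h0 i him (by linarith [(Nat.floor_lt' (by omega : i ≠ 0)).1 h])
  by_cases hm : ⌊t⌋₊ < m
  · rw [Finset.sum_eq_single_of_mem _ (Finset.mem_range.2 hm) fun i hi =>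
      hfloor i (Finset.mem_range.1 hi)]
    exact hg _ hm
  · rw [Finset.sum_eq_zero fun i hi => hfloor i (Finset.mem_range.1 hi)
      fun h => hm (h ▸ Finset.mem_range.1 hi)]
    simpa using hB

lemma abs_sum_range_mul_le {m : ℕ} {c g : ℕ → ℝ} {B : ℝ} (hc0 : ∀ i < m, 0 ≤ c i)
    (hc1 : ∀ i < m, c i ≤ 1) (hg : ∀ i < m, |g i| ≤ B) :
    |∑ i ∈ range m, c i * g i| ≤ m * B := by
  refine (Finset.abs_sum_le_sum_abs _ _).trans ?_
  refine (Finset.sum_le_card_nsmul _ _ B fun i hi => ?_).trans (by simp)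
  have hi := Finset.mem_range.1 hi
  rw [abs_mul, abs_of_nonneg (hc0 i hi)]
  exact (mul_le_of_le_one_left (abs_nonneg _) (hc1 i hi)).trans (hg i hi)

/-- Only the tile containing `β` contributes. -/
lemma abs_sum_lsDisc_le (hb : 1 < L + S) (hγ0 : 0 < γ)
    (hroot : (L : ℝ) * γ + (S : ℝ) * γ ^ 2 = 1) {X : ℕ} {B : ℝ}
    (hB : ∀ Y ≤ X ⌈/⌉ (L + S), ∀ β, |lsDisc L S γ Y β| ≤ B) (β : ℝ) :
    |∑ a ∈ range L, lsDisc L S γ ((X - a) ⌈/⌉ (L + S)) (β / γ - a) +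
      ∑ s ∈ range S, lsDisc L S γ ((X - (L + s)) ⌈/⌉ (L + S) ^ 2)
        ((β - L * γ) / γ ^ 2 - s)| ≤ B := by
  have hb0 : 0 < L + S := by omega
  have hB0 : 0 ≤ B := (abs_nonneg _).trans (hB 0 (Nat.zero_le _) 0)
  have hshort (s : ℕ) : (X - (L + s)) ⌈/⌉ (L + S) ^ 2 ≤ X ⌈/⌉ (L + S) := by
    refine (sub_ceilDiv_le (pow_pos hb0 2) X _).trans ?_
    rw [ceilDiv_le_iff_le_mul (pow_pos hb0 2), pow_two, mul_assoc]
    exact (le_smul_ceilDiv hb0).trans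
      (Nat.mul_le_mul_left _ (Nat.le_mul_of_pos_left _ hb0))
  rcases le_total β (L * γ) with h | h
  · rw [Finset.sum_eq_zero (s := range S), add_zero]
    · exact abs_sum_range_le_of_support hB0 (fun a _ => hB _ (sub_ceilDiv_le hb0 X a) _)
        (fun _ _ => lsDisc_of_nonpos hγ0.le _) (fun _ _ => lsDisc_of_one_le hb hγ0 hroot _)
    · refine fun s _ => lsDisc_of_nonpos hγ0.le _ (sub_nonpos.2 ?_)
      exact (div_nonpos_of_nonpos_of_nonneg (sub_nonpos.2 h) (sq_nonneg γ)).trans s.cast_nonneg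
  · rw [Finset.sum_eq_zero (s := range L), zero_add]
    · exact abs_sum_range_le_of_support hB0 (fun s _ => hB _ (hshort s) _)
        (fun _ _ => lsDisc_of_nonpos hγ0.le _) (fun _ _ => lsDisc_of_one_le hb hγ0 hroot _)
    · refine fun a ha => lsDisc_of_one_le hb hγ0 hroot _ ?_
      have hβ : (L : ℝ) ≤ β / γ := (le_div_iff₀ hγ0).2 h
      have ha : (a : ℝ) + 1 ≤ L := by exact_mod_cast Finset.mem_range.1 ha
      linarith

lemma abs_lsTotal_sub_ceilDiv_sub_le {a c : ℕ} (hac : a < c) (X : ℕ) :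
    |lsTotal L S ((X - a) ⌈/⌉ c) - lsTotal L S (X / c)| ≤ 1 := by
  have hlower := lsTotal_div_le (L := L) (S := S) hac X
  have hupper := lsTotal_sub_ceilDiv_le (L := L) (S := S) (Nat.zero_lt_of_lt hac) X a
  rw [abs_le]
  constructor <;> linarith

lemma abs_lsTotal_sub_mul_le {a : ℕ} (ha : a < L + S) (γ : ℝ) (X : ℕ) :
    |lsTotal L S ((X - a) ⌈/⌉ (L + S)) - γ * lsTotal L S X| ≤ 1 + |lsDefect L S γ X| :=
  calc |lsTotal L S ((X - a) ⌈/⌉ (L + S)) - γ * lsTotal L S X|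
      = |(lsTotal L S ((X - a) ⌈/⌉ (L + S)) - lsTotal L S (X / (L + S))) +
          lsDefect L S γ X| := by rw [lsDefect, sub_add_sub_cancel]
    _ ≤ 1 + |lsDefect L S γ X| := (abs_add_le _ _).trans <| by
        gcongr
        exact abs_lsTotal_sub_ceilDiv_sub_le ha X

lemma abs_lsTotal_sub_sq_mul_le {a : ℕ} (ha : a < (L + S) ^ 2) (hγ0 : 0 ≤ γ) (hγ1 : γ ≤ 1)
    (X : ℕ) :
    |lsTotal L S ((X - a) ⌈/⌉ (L + S) ^ 2) - γ ^ 2 * lsTotal L S X| ≤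
      1 + |lsDefect L S γ (X / (L + S))| + |lsDefect L S γ X| :=
  calc |lsTotal L S ((X - a) ⌈/⌉ (L + S) ^ 2) - γ ^ 2 * lsTotal L S X|
      = |(lsTotal L S ((X - a) ⌈/⌉ (L + S) ^ 2) - lsTotal L S (X / (L + S) ^ 2)) +
          lsDefect L S γ (X / (L + S)) + γ * lsDefect L S γ X| := by
        rw [lsDefect, lsDefect, Nat.div_div_eq_div_mul, ← pow_two]
        ring_nf
    _ ≤ 1 + |lsDefect L S γ (X / (L + S))| + |lsDefect L S γ X| :=
        (abs_add_three _ _ _).trans <|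
          add_le_add (add_le_add (abs_lsTotal_sub_ceilDiv_sub_le ha X) le_rfl) <| by
            rw [abs_mul, abs_of_nonneg hγ0]
            exact mul_le_of_le_one_left (abs_nonneg _) hγ1

lemma abs_lsDisc_le_of_lsDefect_le (hL : 0 < L) (hb : 1 < L + S) (hγ0 : 0 < γ)
    (hroot : (L : ℝ) * γ + (S : ℝ) * γ ^ 2 = 1) {X : ℕ} {B E : ℝ}
    (hB : ∀ Y ≤ X ⌈/⌉ (L + S), ∀ β, |lsDisc L S γ Y β| ≤ B)
    (hE : |lsDefect L S γ X| ≤ E) (hE' : |lsDefect L S γ (X / (L + S))| ≤ E) (β : ℝ) :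
    |lsDisc L S γ X β| ≤ B + (L * (1 + E) + S * (1 + E + E)) := by
  have hγ1 := (lt_one_of_root hb hroot).le
  rw [lsDisc_eq hL hb hγ0 hroot]
  refine (abs_add_le _ _).trans (add_le_add (abs_sum_lsDisc_le hb hγ0 hroot hB β)
    ((abs_add_le _ _).trans (add_le_add ?_ ?_)))
  · refine abs_sum_range_mul_le (fun _ _ => clampUnit_nonneg _) (fun _ _ => clampUnit_le_one _)
      fun a ha => (abs_lsTotal_sub_mul_le (by omega) γ X).trans ?_
    gcongr
  · refine abs_sum_range_mul_le (fun _ _ => clampUnit_nonneg _) (fun _ _ => clampUnit_le_one _)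
      fun s hs => (abs_lsTotal_sub_sq_mul_le (add_lt_add_pow_two hs) hγ0.le hγ1 X).trans ?_
    gcongr

lemma exists_abs_lsDisc_le (hL : 0 < L) (hb : 1 < L + S) (hγ0 : 0 < γ)
    (hroot : (L : ℝ) * γ + (S : ℝ) * γ ^ 2 = 1) (hρ : 1 < (S : ℝ) * γ) :
    ∃ H : ℝ, 0 < H ∧ ∀ k X : ℕ, X ≤ (L + S) ^ k → ∀ β : ℝ,
      |lsDisc L S γ X β| ≤ H * (S * γ) ^ k := by
  obtain ⟨D, hD0, hD⟩ := exists_abs_lsDefect_le hL hb hγ0 hroot hρ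
  set ρ := (S : ℝ) * γ
  have hρ' : 0 < ρ - 1 := by linarith
  set G : ℝ := L * (1 + D) + S * (1 + D + D) with hG
  set H : ℝ := 1 + G * ρ / (ρ - 1) with hH
  have hGH : H + G * ρ ≤ H * ρ := by
    have hHρ : H * (ρ - 1) = ρ - 1 + G * ρ := by
      rw [hH, add_mul, one_mul, div_mul_cancel₀ _ hρ'.ne']
    linarith
  refine ⟨H, by positivity, fun k => ?_⟩
  induction k with
  | zero =>
    intro X hX β
    have hX : (X : ℝ) ≤ 1 := by exact_mod_cast hX
    have hH1 : 1 ≤ H := le_add_of_nonneg_right (by positivity)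
    simpa using (abs_lsDisc_le L S γ X β).trans (hX.trans hH1)
  | succ k ih =>
    intro X hX β
    have hb0 : 0 < L + S := by omega
    have hceil : X ⌈/⌉ (L + S) ≤ (L + S) ^ k := by
      rwa [ceilDiv_le_iff_le_mul hb0, ← pow_succ']
    have hdiv : X / (L + S) ≤ (L + S) ^ (k + 1) := (Nat.div_le_self _ _).trans hX
    have hρk : 1 ≤ ρ ^ (k + 1) := one_le_pow₀ hρ.le
    calc |lsDisc L S γ X β|
        ≤ H * ρ ^ k + (L * (1 + D * ρ ^ (k + 1)) + S * (1 + D * ρ ^ (k + 1) + D * ρ ^ (k + 1))) :=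
          abs_lsDisc_le_of_lsDefect_le hL hb hγ0 hroot (fun Y hY => ih Y (hY.trans hceil))
            (hD _ X hX) (hD _ _ hdiv) β
      _ ≤ H * ρ ^ k + (L * (ρ ^ (k + 1) + D * ρ ^ (k + 1)) +
            S * (ρ ^ (k + 1) + D * ρ ^ (k + 1) + D * ρ ^ (k + 1))) := by gcongr
      _ = (H + G * ρ) * ρ ^ k := by
          rw [hG]
          ring
      _ ≤ H * ρ * ρ ^ k := by gcongr
      _ = H * ρ ^ (k + 1) := by ring

/-! ### The first `K` points -/

lemma sum_filter_range_nth {M : Type*} [AddCommMonoid M] {p : ℕ → Prop} [DecidablePred p]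
    (hp : (Set.ofPred p).Infinite) (f : ℕ → M) (K : ℕ) :
    ∑ n ∈ range (Nat.nth p K) with p n, f n = ∑ i ∈ range K, f (Nat.nth p i) := by
  induction K with
  | zero =>
    have hempty : #{n ∈ range (Nat.nth p 0) | p n} = 0 := by
      rw [← Nat.count_eq_card_filter_range, Nat.count_nth_zero]
    rw [Finset.card_eq_zero.1 hempty, Finset.sum_range_zero, Finset.sum_empty]
  | succ K ih =>
    rw [Nat.filter_range_nth_eq_insert_of_infinite hp, Finset.sum_insert (by simp), ih,
      Finset.sum_range_succ, add_comm]

lemma sum_indicator_lsSeq (hL : 0 < L) (hb : 1 < L + S) (hγ : 0 ≤ γ) (K : ℕ) (β : ℝ) :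
    ∑ j ∈ Finset.Icc 1 K, (Set.Ico 0 β).indicator (fun _ => (1 : ℝ)) (lsSeq L S γ j) =
      lsCount L S γ (Nat.nth (memNLS L S) K) β := by
  rw [lsCount, sum_filter_range_nth (setOfPred_memNLS_infinite hL hb),
    ← Finset.Ico_add_one_right_eq_Icc, Finset.sum_Ico_eq_sum_range, Nat.add_sub_cancel]
  refine Finset.sum_congr rfl fun i _ => ?_
  simp [lsSeq, Set.indicator_apply, lsPhi_nonneg L S hγ]

lemma inv_rpow_neg_log_div_log (hγ0 : 0 < γ) (hγ1 : γ ≠ 1) {ρ : ℝ} (hρ : 0 < ρ) :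
    γ⁻¹ ^ (-Real.log ρ / Real.log γ) = ρ := by
  have he : -Real.log ρ / Real.log γ = Real.logb γ⁻¹ ρ := by
    rw [Real.logb_inv_base, Real.logb, neg_div]
  rw [he, Real.rpow_logb (inv_pos.2 hγ0) (inv_ne_one.2 hγ1) hρ]

lemma neg_log_div_log_nonneg (hγ0 : 0 < γ) (hγ1 : γ < 1) {ρ : ℝ} (hρ : 1 ≤ ρ) :
    0 ≤ -Real.log ρ / Real.log γ :=
  div_nonneg_of_nonpos (neg_nonpos.2 (Real.log_nonneg hρ)) (Real.log_neg hγ0 hγ1).le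

lemma mul_pow_le_mul_rpow (hL : 0 < L) (hγ0 : 0 < γ) (hγ1 : γ < 1)
    (hroot : (L : ℝ) * γ + (S : ℝ) * γ ^ 2 = 1) (hρ : 1 ≤ (S : ℝ) * γ) {k X : ℕ}
    (hX : (L + S) ^ k ≤ X) :
    (S * γ) ^ k ≤ S * γ * lsTotal L S X ^ (-Real.log (S * γ) / Real.log γ) := by
  have hinv := inv_rpow_neg_log_div_log hγ0 hγ1.ne (zero_lt_one.trans_le hρ)
  have he0 := neg_log_div_log_nonneg hγ0 hγ1 hρ
  set e := -Real.log (S * γ) / Real.log γ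
  calc (S * γ) ^ k = (γ⁻¹ ^ k) ^ e := by
        rw [← hinv, ← Real.rpow_mul_natCast (by positivity),
          ← Real.rpow_natCast_mul (by positivity), mul_comm]
    _ ≤ (γ⁻¹ * lsTotal L S X) ^ e := by
        gcongr
        exact inv_pow_le_inv_mul_lsTotal hL hγ0 hγ1 hroot k X hX
    _ = S * γ * lsTotal L S X ^ e := by
        rw [Real.mul_rpow (by positivity) (lsTotal_nonneg L S X), hinv]

lemma exists_abs_sum_indicator_lsSeq_sub_le (hL : 0 < L) (hb : 1 < L + S) (hγ0 : 0 < γ)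
    (hroot : (L : ℝ) * γ + (S : ℝ) * γ ^ 2 = 1) (hρ : 1 < (S : ℝ) * γ) :
    ∃ C : ℝ, 0 < C ∧ ∀ K : ℕ, 0 < K → ∀ β ∈ Set.Icc (0 : ℝ) 1,
      |∑ j ∈ Finset.Icc 1 K, (Set.Ico 0 β).indicator (fun _ => (1 : ℝ)) (lsSeq L S γ j) - β * K| ≤
        C * (K : ℝ) ^ (-Real.log (S * γ) / Real.log γ) := by
  obtain ⟨H, hH0, hH⟩ := exists_abs_lsDisc_le hL hb hγ0 hroot hρ
  refine ⟨H * (S * γ) ^ 2, by positivity, fun K hK β hβ => ?_⟩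
  set X := Nat.nth (memNLS L S) K
  have hX : 0 < X := (Nat.zero_le _).trans_lt
    (Nat.nth_strictMono (setOfPred_memNLS_infinite hL hb) hK)
  have htotal : lsTotal L S X = K := lsTotal_nth hL hb K
  set k := Nat.log (L + S) X
  have hgrowth := mul_pow_le_mul_rpow hL hγ0 (lt_one_of_root hb hroot) hroot hρ.le
    (Nat.pow_log_le_self (L + S) hX.ne')
  have hdisc : lsDisc L S γ X β =
      ∑ j ∈ Finset.Icc 1 K, (Set.Ico 0 β).indicator (fun _ => (1 : ℝ)) (lsSeq L S γ j) - β * K := by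
    rw [lsDisc, clampUnit_of_mem_Icc hβ, htotal, sum_indicator_lsSeq hL hb hγ0.le]
  rw [htotal] at hgrowth
  rw [← hdisc]
  calc |lsDisc L S γ X β| ≤ H * (S * γ) ^ (k + 1) :=
        hH (k + 1) X (Nat.lt_pow_succ_log_self hb X).le β
    _ = H * (S * γ) * (S * γ) ^ k := by ring
    _ ≤ H * (S * γ) * (S * γ * (K : ℝ) ^ (-Real.log (S * γ) / Real.log γ)) := by gcongr
    _ = H * (S * γ) ^ 2 * (K : ℝ) ^ (-Real.log (S * γ) / Real.log γ) := by ring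

end Counting

/-! ### Point sets à la van der Corput -/

lemma sum_indicator_Ico_div_mul {N : ℕ} (hN : 0 < N) {a : ℝ} (ha : a ≤ 1) (y : ℕ → ℝ) :
    ∑ j ∈ Finset.Icc 1 N,
        (Set.Ico 0 a).indicator (fun _ => (1 : ℝ)) (((j : ℝ) - 1) / N) * y j =
      ∑ j ∈ Finset.Icc 1 ⌈a * N⌉₊, y j := by
  have hN' : (0 : ℝ) < N := by exact_mod_cast hN
  have hceil : ⌈a * N⌉₊ ≤ N := Nat.ceil_le.2 (mul_le_of_le_one_left hN'.le ha)
  have hmem : ∀ j ∈ Finset.Icc 1 N, ((j : ℝ) - 1) / N ∈ Set.Ico 0 a ↔ j ≤ ⌈a * N⌉₊ := by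
    intro j hj
    obtain ⟨i, rfl⟩ := Nat.exists_eq_add_of_le' (Finset.mem_Icc.1 hj).1
    rw [Nat.cast_succ, add_sub_cancel_right, Nat.succ_le_iff, Nat.lt_ceil, ← div_lt_iff₀ hN',
      Set.mem_Ico, and_iff_right (by positivity)]
  rw [← Finset.sum_subset (Finset.Icc_subset_Icc_right hceil)]
  · refine Finset.sum_congr rfl fun j hj => ?_
    obtain ⟨hj1, hj2⟩ := Finset.mem_Icc.1 hj
    rw [Set.indicator_of_mem ((hmem j (Finset.mem_Icc.2 ⟨hj1, hj2.trans hceil⟩)).2 hj2), one_mul]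
  · intro j hj hj'
    rw [Set.indicator_of_notMem, zero_mul]
    exact fun h => hj' (Finset.mem_Icc.2 ⟨(Finset.mem_Icc.1 hj).1, (hmem j hj).1 h⟩)

lemma mul_discrep2_le_add_one {x : ℕ → ℝ} {N : ℕ} (hN : 0 < N) {B : ℝ}
    (hx : ∀ K : ℕ, 0 < K → K ≤ N → ∀ β ∈ Set.Icc (0 : ℝ) 1,
      |∑ j ∈ Finset.Icc 1 K, (Set.Ico 0 β).indicator (fun _ => (1 : ℝ)) (x j) - β * K| ≤ B) :
    N * discrep2 (fun n => (((n : ℝ) - 1) / N, x n)) N ≤ B + 1 := by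
  have hN' : (0 : ℝ) < N := by exact_mod_cast hN
  have hB : 0 ≤ B := (abs_nonneg _).trans (hx N hN le_rfl 0 (by simp))
  rw [← le_div_iff₀' hN']
  refine Real.iSup_le (fun ⟨⟨a, β⟩, ha0, ha1, hβ0, hβ1⟩ => ?_) (by positivity)
  simp only at ha0 ha1 hβ0 hβ1 ⊢
  rw [sum_indicator_Ico_div_mul hN ha1 fun j => (Set.Ico 0 β).indicator (fun _ => (1 : ℝ)) (x j)]
  set K := ⌈a * N⌉₊
  set A := ∑ j ∈ Finset.Icc 1 K, (Set.Ico 0 β).indicator (fun _ => (1 : ℝ)) (x j)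
  have hK : K ≤ N := Nat.ceil_le.2 (mul_le_of_le_one_left hN'.le ha1)
  have hK0 : 0 ≤ (K : ℝ) - a * N := sub_nonneg.2 (Nat.le_ceil _)
  have hK1 : (K : ℝ) - a * N ≤ 1 := by
    linarith [Nat.ceil_lt_add_one (show 0 ≤ a * N by positivity)]
  have hround : |β * (K - a * N)| ≤ 1 := by
    rw [abs_of_nonneg (by positivity)]
    exact mul_le_one₀ hβ1 hK0 hK1
  calc |A / N - a * β| = |(A - β * K) + β * (K - a * N)| / N := by
        rw [← abs_of_pos hN', ← abs_div, abs_of_pos hN']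
        congr 1
        field_simp
        ring
    _ ≤ (B + 1) / N := by
        gcongr
        exact (abs_add_le _ _).trans
          (add_le_add (hx K (Nat.ceil_pos.2 (by positivity)) hK β ⟨hβ0.le, hβ1⟩) hround)

lemma one_lt_mul_of_root {L S : ℕ} (hSL : L + 2 ≤ S) {γ : ℝ} (hγ0 : 0 < γ)
    (hroot : (L : ℝ) * γ + (S : ℝ) * γ ^ 2 = 1) : 1 < (S : ℝ) * γ := by
  have hSL' : (L : ℝ) + 2 ≤ S := by exact_mod_cast hSL
  by_contra! h
  nlinarith

theorem ls_vdc_discrepancy_S_ge_L_add_two_general (L S : ℕ) (hL : 0 < L) (hSL : L + 2 ≤ S)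
    (γ : ℝ) (hγ0 : 0 < γ) (hroot : (L : ℝ) * γ + (S : ℝ) * γ ^ 2 = 1) :
    ∃ C : ℝ, 0 < C ∧ ∀ N : ℕ, 0 < N →
      (N : ℝ) * discrep2 (fun n => (((n : ℝ) - 1) / N, lsSeq L S γ n)) N
        ≤ C * (N : ℝ) ^ (-Real.log ((S : ℝ) * γ) / Real.log γ) := by
  have hb : 1 < L + S := by omega
  have hρ := one_lt_mul_of_root hSL hγ0 hroot
  have he0 := neg_log_div_log_nonneg hγ0 (lt_one_of_root hb hroot) hρ.le
  obtain ⟨C, hC0, hC⟩ := exists_abs_sum_indicator_lsSeq_sub_le hL hb hγ0 hroot hρ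
  refine ⟨C + 1, by positivity, fun N hN => ?_⟩
  set e := -Real.log ((S : ℝ) * γ) / Real.log γ
  have hNe : 1 ≤ (N : ℝ) ^ e := Real.one_le_rpow (by exact_mod_cast hN) he0
  calc (N : ℝ) * discrep2 (fun n => (((n : ℝ) - 1) / N, lsSeq L S γ n)) N
      ≤ C * (N : ℝ) ^ e + 1 := mul_discrep2_le_add_one hN fun K hK hKN β hβ =>
        (hC K hK β hβ).trans (by gcongr)
    _ ≤ (C + 1) * (N : ℝ) ^ e := by linarith

lemma one_le_two_mul_log {x : ℝ} (hx : 2 ≤ x) : 1 ≤ 2 * Real.log x := by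
  have hlog := Real.one_sub_inv_le_log_of_pos (zero_lt_two.trans_le hx)
  have hinv : x⁻¹ ≤ 2⁻¹ := by gcongr
  linarith

/-- If `S ≥ L+2`, the `(L,S)`-point set à la van der Corput satisfies
`N · D₂(P_{L,S}(N)) ≤ C₃ N^{1−τ} log N` for all `N ≥ 2`,
where `1−τ = −log(Sγ)/log γ`. -/
theorem ls_vdc_discrepancy_S_ge_L_add_two (L S : ℕ) (hL : 0 < L) (hS : 0 < S)
    (hSL : L + 2 ≤ S)
    (γ : ℝ) (hγ0 : 0 < γ) (hγ1 : γ < 1)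
    (hroot : (L : ℝ) * γ + (S : ℝ) * γ ^ 2 = 1) :
    ∃ C₃ : ℝ, 0 < C₃ ∧ ∀ N : ℕ, 2 ≤ N →
      (N : ℝ) * discrep2 (fun n => (((n : ℝ) - 1) / N, lsSeq L S γ n)) N
        ≤ C₃ * (N : ℝ) ^ (-Real.log ((S : ℝ) * γ) / Real.log γ) * Real.log N := by
  obtain ⟨C, hC0, hC⟩ := ls_vdc_discrepancy_S_ge_L_add_two_general L S hL hSL γ hγ0 hroot
  refine ⟨2 * C, by positivity, fun N hN => (hC N (by omega)).trans ?_⟩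
  rw [mul_assoc 2 C, mul_comm 2, mul_assoc]
  exact le_mul_of_one_le_right (by positivity) (one_le_two_mul_log (by exact_mod_cast hN))
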